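/- Let ψ_1 be a measurable real-valued functional on pairs (x, 𝒳) with 𝒳 a finite subset of C_n and x ∈ 𝒳, which is translation-invariant, has radius r_1 ∈ (0,∞), satisfies ‖ψ_1‖ < ∞ and E[ψ_1(U_1, 𝒰_n)] = 0. If φ_1 := π_d r_1^d < n, then Var( (1/n) Σ_{i=1}^n ψ_1(U_i, 𝒰_n) ) ≤ (‖ψ_1‖²/n)(1 + 2^d φ_1) + (‖ψ_1‖/n)( φ_1 + φ_1² (2n − φ_1)/(n − φ_1) ) · rng(ψ_1). -/

import Mathlib

open MeasureTheory ProbabilityTheory Filter Set Metric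
open scoped ENNReal NNReal BigOperators Topology Classical

noncomputable section

/-- Side length `n^(1/d)` of the cube `C_n` of volume `n` in dimension `d`. -/
def sideLen (d n : ℕ) : ℝ := (n : ℝ) ^ ((d : ℝ)⁻¹)

/-- The cube `C_n = [0, L)^d`. -/
def box (d : ℕ) (L : ℝ) : Set (Fin d → ℝ) := Set.univ.pi fun _ => Set.Ico (0 : ℝ) L

/-- The Euclidean toroidal distance on the cube `[0, L)^d`. -/
def torDist {d : ℕ} (L : ℝ) (x y : Fin d → ℝ) : ℝ :=
  Real.sqrt (∑ i, (⨅ k : ℤ, |x i - y i - k * L|) ^ 2)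

/-- The toroidal ball `B_r(x) = {y ∈ C_n : D(x,y) ≤ r}`. -/
def torBall {d : ℕ} (L : ℝ) (x : Fin d → ℝ) (r : ℝ) : Set (Fin d → ℝ) :=
  {y ∈ box d L | torDist L x y ≤ r}

/-- Addition (translation) in the torus `[0, L)^d`. -/
def torAdd {d : ℕ} (L : ℝ) (y x : Fin d → ℝ) : Fin d → ℝ :=
  fun i => L * Int.fract ((y i + x i) / L)

/-- The uniform probability measure on the cube `[0, L)^d`. -/
def uniformBox (d : ℕ) (L : ℝ) : Measure (Fin d → ℝ) :=
  ((L.toNNReal ^ d)⁻¹ : ℝ≥0) • volume.restrict (box d L)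

/-- The joint law of `n` independent points uniformly distributed on the cube `C_n`
of volume `n`; a point configuration is `ω : Fin n → (Fin d → ℝ)`, with `U_i = ω i`. -/
def binppLaw (d n : ℕ) : Measure (Fin n → Fin d → ℝ) :=
  Measure.pi fun _ => uniformBox d (sideLen d n)

/-- The total covered volume `V` of the union of toroidal balls of radius `ρ`
centered at the `n` points. -/
def coveredVol (d n : ℕ) (ρ : ℝ) (ω : Fin n → Fin d → ℝ) : ℝ :=
  (volume (⋃ i, torBall (sideLen d n) (ω i) ρ)).toReal

/-- The number `S` of isolated points: indices `i` with `𝒰_n ∩ B_ρ(U_i) = {U_i}`. -/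
def isolCount (d n : ℕ) (ρ : ℝ) (ω : Fin n → Fin d → ℝ) : ℝ :=
  ∑ i, if Set.range ω ∩ torBall (sideLen d n) (ω i) ρ = {ω i} then 1 else 0

/-- `π_d`: the volume of the unit ball in `ℝ^d`. -/
def unitBallVol (d : ℕ) : ℝ :=
  (volume (Metric.closedBall (0 : EuclideanSpace ℝ (Fin d)) 1)).toReal

/-- `φ = π_d ρ^d`. -/
def phi (d : ℕ) (ρ : ℝ) : ℝ := unitBallVol d * ρ ^ d

/-- The standard normal cumulative distribution function. -/
def stdGaussCDF (t : ℝ) : ℝ := (gaussianReal 0 1 (Set.Iic t)).toReal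

/-- The Kolmogorov distance `D_X` between the law of the standardized version of `X`
and the standard normal. -/
def kolDist {Ω : Type*} [MeasurableSpace Ω] (P : Measure Ω) (X : Ω → ℝ) : ℝ :=
  ⨆ t : ℝ,
    |(P {ω | (X ω - ∫ x, X x ∂P) / Real.sqrt (variance X P) ≤ t}).toReal - stdGaussCDF t|

/-- A fixed unit vector in `ℝ^d` (junk value `0` if `d = 0`). -/
def unitVec (d : ℕ) : EuclideanSpace ℝ (Fin d) :=
  if h : 0 < d then EuclideanSpace.single (⟨0, h⟩ : Fin d) 1 else 0

/-- `ω_d(r)`: the volume of the union of two unit balls in `ℝ^d` whose centers are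
at distance `r` apart. -/
def omegaVol (d : ℕ) (r : ℝ) : ℝ :=
  (volume (Metric.closedBall (0 : EuclideanSpace ℝ (Fin d)) 1 ∪
      Metric.closedBall (r • unitVec d) 1)).toReal

/-- The integral `J_{r,d}(ρ) = d π_d ∫_0^r exp(-ρ^d ω_d(t)) t^{d-1} dt`. -/
def Jint (r : ℝ) (d : ℕ) (ρ : ℝ) : ℝ :=
  d * unitBallVol d * ∫ t in (0:ℝ)..r, Real.exp (-(ρ ^ d * omegaVol d t)) * t ^ (d - 1)

/-- The limiting variance density `g_V(ρ)`. -/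
def gV (d : ℕ) (ρ : ℝ) : ℝ :=
  ρ ^ d * Jint 2 d ρ - (2 ^ d * phi d ρ + phi d ρ ^ 2) * Real.exp (-(2 * phi d ρ))

/-- The limiting variance density `g_S(ρ)`. -/
def gS (d : ℕ) (ρ : ℝ) : ℝ :=
  Real.exp (-phi d ρ) - (1 + (2 ^ d - 2) * phi d ρ + phi d ρ ^ 2) * Real.exp (-(2 * phi d ρ))
    + ρ ^ d * (Jint 2 d ρ - Jint 1 d ρ)

/-- `κ_d`: the maximum number of closed unit balls in `ℝ^d` that can be packed so that
they all intersect a closed unit ball at the origin but are pairwise disjoint. -/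
def kappa (d : ℕ) : ℕ :=
  sSup {k : ℕ | ∃ c : Fin k → EuclideanSpace ℝ (Fin d),
    (∀ i, (Metric.closedBall (c i) 1 ∩ Metric.closedBall 0 1).Nonempty) ∧
    Pairwise fun i j => Disjoint (Metric.closedBall (c i) 1) (Metric.closedBall (c j) 1)}

/-- `η_V(n, ρ)`. -/
def etaV (d n : ℕ) (ρ : ℝ) : ℝ :=
  2 * phi d ρ ^ 2 * ((3 ^ d + 1) * phi d ρ + 1) ^ 2 *
      (1 + (2 ^ d + 1) * 6 ^ d * phi d ρ +
        ((2 * n - 6 ^ d * phi d ρ) / (n - 6 ^ d * phi d ρ)) * 6 ^ (2 * d) * phi d ρ ^ 2) +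
    2 * phi d ρ ^ 4 *
      (3 * (4 ^ d + 2 ^ d) * phi d ρ +
        3 * 4 ^ d * phi d ρ ^ 2 * ((2 * n - 3 * 2 ^ d * phi d ρ) / (n - 3 * 2 ^ d * phi d ρ)) +
        4 + 2 / n)

/-- `η_S(n, ρ)`. -/
def etaS (d n : ℕ) (ρ : ℝ) : ℝ :=
  2 * (1 + 2 * (kappa d : ℝ)) ^ 2 *
      (1 + (2 ^ d + 1) * 3 ^ d * phi d ρ +
        ((2 * n - 3 ^ d * phi d ρ) / (n - 3 ^ d * phi d ρ)) * 9 ^ d * phi d ρ ^ 2) +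
    (((1 : ℝ) + kappa d) ^ 2 / 2) *
      ((2 ^ d + 2 * 3 ^ d + 3) * phi d ρ +
        (2 ^ (d + 1) + 1) *
          ((2 * n - (2 ^ (d + 1) + 1) * phi d ρ) / (n - (2 ^ (d + 1) + 1) * phi d ρ)) *
          phi d ρ ^ 2 +
        (4 * n - 2) / (n - 1))

/-- A functional `ψ` on pairs `(x, 𝒳)` (with `𝒳` a finite subset of the cube and `x ∈ 𝒳`)
is translation-invariant if `ψ(x, 𝒳) = ψ(y + x, y + 𝒳)` for all `y` in the torus. -/
def TransInvariant (d : ℕ) (L : ℝ) (ψ : (Fin d → ℝ) → Finset (Fin d → ℝ) → ℝ) : Prop :=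
  ∀ (x : Fin d → ℝ) (𝒳 : Finset (Fin d → ℝ)), x ∈ 𝒳 → ↑𝒳 ⊆ box d L →
    ∀ y ∈ box d L, ψ x 𝒳 = ψ (torAdd L y x) (𝒳.image (torAdd L y))

/-- A functional `ψ` has radius `r` if `ψ(x, 𝒳) = ψ(x, 𝒳 ∩ B_r(x))` for all pairs. -/
def HasRadius (d : ℕ) (L : ℝ) (ψ : (Fin d → ℝ) → Finset (Fin d → ℝ) → ℝ) (r : ℝ) : Prop :=
  ∀ (x : Fin d → ℝ) (𝒳 : Finset (Fin d → ℝ)), x ∈ 𝒳 → ↑𝒳 ⊆ box d L →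
    ψ x 𝒳 = ψ x (𝒳.filter (· ∈ torBall L x r))

/-!
Write `Z i` for the value of `ψ` at the `i`-th point and `p ≤ φ / n` for the probability that a
given point falls into a given ball of radius `r`. The variances contribute at most `M ^ 2 / n`; for
the covariance of `Z i` and `Z j` condition on the points `i` and `j`. They are within distance
`2 * r` with probability at most `2 ^ d * φ / n`, and then `M ^ 2` bounds the product. Otherwise
`Z i` and `Z j` depend on the remaining points through two disjoint balls. Replacing these points
one after the other by independent copies, each replacement matters only if the point and its copy
lie in different balls, so the conditional covariance is at most `2 * M * R * n * p ^ 2`. The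
conditional mean of `Z i` is at most `R * p` in absolute value: given the point `i` alone it is `0`
by translation invariance, and fixing the point `j` outside the ball around the point `i` changes
the value only when the free point `j` was inside that ball. The theorem follows from
`2 ≤ (2 * n - φ) / (n - φ)`.
-/

section ProductSpace

variable {ι E : Type*}

/-- `f` does not react when its `k`-th argument moves within the complement of `B`: the `k`-th
point influences `f` only through its position inside `B`. -/
def UpdateInvariantOff (f : (ι → E) → ℝ) (k : ι) (B : Set E) : Prop :=
  ∀ ω u v, u ∉ B → v ∉ B → f (Function.update ω k u) = f (Function.update ω k v)

/-- The configuration read off a family of pairs by taking second components on `S` and first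
components elsewhere; it interpolates between a configuration (`S = ∅`) and an independent copy
(`S = univ`). -/
def interpolate (S : Finset ι) (z : ι → E × E) : ι → E :=
  S.piecewise (fun k => (z k).2) (fun k => (z k).1)

/-- Exchange of the two components of the `k`-th pair. -/
def swapAt (k : ι) (z : ι → E × E) : ι → E × E :=
  Function.update z k (z k).swap

lemma interpolate_swapAt (S : Finset ι) {k : ι} (hk : k ∉ S) (z : ι → E × E) :
    interpolate S (swapAt k z) = interpolate (insert k S) z := by
  ext l
  obtain rfl | hl := eq_or_ne l k
  · simp [interpolate, swapAt, hk]
  · simp [interpolate, swapAt, hl, Finset.piecewise]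

lemma interpolate_insert_swapAt (S : Finset ι) {k : ι} (hk : k ∉ S) (z : ι → E × E) :
    interpolate (insert k S) (swapAt k z) = interpolate S z := by
  rw [← interpolate_swapAt S hk]
  simp [swapAt]

lemma update_interpolate_fst (S : Finset ι) {k : ι} (hk : k ∉ S) (z : ι → E × E) :
    Function.update (interpolate S z) k (z k).1 = interpolate S z := by
  simp [interpolate, hk]

lemma update_interpolate_snd (S : Finset ι) (k : ι) (z : ι → E × E) :
    Function.update (interpolate S z) k (z k).2 = interpolate (insert k S) z := by
  simp [interpolate, Finset.piecewise_insert]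

lemma abs_update_sub_mul_update_sub_le {f g : (ι → E) → ℝ} {k : ι} {B₁ B₂ : Set E} {a b : ℝ}
    (hfa : ∀ ω ω', |f ω - f ω'| ≤ a) (hgb : ∀ ω ω', |g ω - g ω'| ≤ b)
    (hB : Disjoint B₁ B₂) (hf : UpdateInvariantOff f k B₁) (hg : UpdateInvariantOff g k B₂)
    (ω ω' : ι → E) (x : E × E) :
    |(f (Function.update ω k x.1) - f (Function.update ω k x.2)) *
        (g (Function.update ω' k x.1) - g (Function.update ω' k x.2))| ≤
      (B₁ ×ˢ B₂).indicator (fun _ => a * b) x + (B₂ ×ˢ B₁).indicator (fun _ => a * b) x := by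
  have ha : 0 ≤ a := (abs_nonneg _).trans (hfa ω ω)
  have hb : 0 ≤ b := (abs_nonneg _).trans (hgb ω ω)
  have hab : 0 ≤ a * b := mul_nonneg ha hb
  have hnonneg (C : Set (E × E)) : 0 ≤ C.indicator (fun _ => a * b) x :=
    indicator_nonneg (fun _ _ => hab) x
  by_cases h₁ : x.1 ∉ B₁ ∧ x.2 ∉ B₁
  · simpa [hf ω _ _ h₁.1 h₁.2] using add_nonneg (hnonneg _) (hnonneg _)
  by_cases h₂ : x.1 ∉ B₂ ∧ x.2 ∉ B₂
  · simpa [hg ω' _ _ h₂.1 h₂.2] using add_nonneg (hnonneg _) (hnonneg _)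
  have hsplit : x ∈ B₁ ×ˢ B₂ ∨ x ∈ B₂ ×ˢ B₁ := by
    have h₃ : x.1 ∈ B₁ → x.1 ∉ B₂ := fun h => Set.disjoint_left.1 hB h
    have h₄ : x.2 ∈ B₁ → x.2 ∉ B₂ := fun h => Set.disjoint_left.1 hB h
    simp only [Set.mem_prod]
    tauto
  rw [abs_mul]
  refine (mul_le_mul (hfa _ _) (hgb _ _) (abs_nonneg _) ha).trans ?_
  obtain h | h := hsplit
  · rw [indicator_of_mem h]
    exact le_add_of_nonneg_right (hnonneg _)
  · rw [indicator_of_mem h]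
    exact le_add_of_nonneg_left (hnonneg _)

lemma memLp_of_abs_sub_le {α : Type*} [MeasurableSpace α] {ν : Measure α} [IsFiniteMeasure ν]
    {f : α → ℝ} (hf : AEStronglyMeasurable f ν) {a : ℝ} (ha : ∀ x y, |f x - f y| ≤ a)
    (p : ℝ≥0∞) : MemLp f p ν := by
  obtain h | ⟨⟨x⟩⟩ := isEmpty_or_nonempty α
  · simp [Measure.eq_zero_of_isEmpty]
  · refine MemLp.of_bound hf (|f x| + a) (ae_of_all _ fun y => ?_)
    have := abs_sub_abs_le_abs_sub (f y) (f x)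
    rw [Real.norm_eq_abs]
    linarith [ha y x]

lemma integral_comp_of_measurePreserving {α β : Type*} [MeasurableSpace α] [MeasurableSpace β]
    {ν : Measure α} {ρ : Measure β} {σ : α → β} (hσ : MeasurePreserving σ ν ρ) {f : β → ℝ}
    (hf : AEStronglyMeasurable f ρ) : ∫ x, f (σ x) ∂ν = ∫ y, f y ∂ρ := by
  rw [← hσ.map_eq] at hf ⊢
  exact (integral_map hσ.aemeasurable hf).symm

lemma abs_integral_le_of_abs_add_comp_le {α : Type*} [MeasurableSpace α] {ν : Measure α}
    {σ : α → α} (hσ : MeasurePreserving σ ν ν) {F H : α → ℝ} (hF : Integrable F ν)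
    (hH : Integrable H ν) (hFH : ∀ x, |F x + F (σ x)| ≤ H x) :
    |∫ x, F x ∂ν| ≤ (∫ x, H x ∂ν) / 2 := by
  have hsum : ∫ x, (F x + F (σ x)) ∂ν = 2 * ∫ x, F x ∂ν := by
    rw [integral_add (g := fun x => F (σ x)) hF (hσ.integrable_comp_of_integrable hF),
      integral_comp_of_measurePreserving hσ hF.aestronglyMeasurable, two_mul]
  have := norm_integral_le_of_norm_le (f := fun x => F x + F (σ x)) hH (ae_of_all _ hFH)
  rw [hsum, Real.norm_eq_abs, abs_mul, abs_two] at this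
  linarith

variable [MeasurableSpace E] [Fintype ι] (μ : ι → Measure E) [∀ k, IsProbabilityMeasure (μ k)]

lemma measurePreserving_interpolate (S : Finset ι) :
    MeasurePreserving (interpolate S) (Measure.pi fun k => (μ k).prod (μ k)) (Measure.pi μ) := by
  have hcoord (k : ι) : MeasurePreserving (fun x : E × E => if k ∈ S then x.2 else x.1)
      ((μ k).prod (μ k)) (μ k) := by
    split_ifs
    exacts [measurePreserving_snd, measurePreserving_fst]
  exact measurePreserving_pi _ _ hcoord

lemma measurePreserving_swapAt (k : ι) :
    MeasurePreserving (swapAt (E := E) k) (Measure.pi fun k => (μ k).prod (μ k))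
      (Measure.pi fun k => (μ k).prod (μ k)) := by
  have hcoord (l : ι) : MeasurePreserving (fun x : E × E => if l = k then x.swap else x)
      ((μ l).prod (μ l)) ((μ l).prod (μ l)) := by
    split_ifs
    exacts [Measure.measurePreserving_swap, MeasurePreserving.id _]
  convert measurePreserving_pi _ _ hcoord using 1
  ext z l : 2
  simp only [swapAt, Function.update_apply]
  split_ifs with h
  exacts [h ▸ rfl, rfl]

lemma measurePreserving_piecewise (S : Finset ι) :
    MeasurePreserving (fun z : (ι → E) × (ι → E) => S.piecewise z.1 z.2)
      ((Measure.pi μ).prod (Measure.pi μ)) (Measure.pi μ) := by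
  have hswap : MeasurePreserving Prod.swap ((Measure.pi μ).prod (Measure.pi μ))
      ((Measure.pi μ).prod (Measure.pi μ)) := Measure.measurePreserving_swap
  exact (measurePreserving_interpolate μ S).comp
    ((measurePreserving_arrowProdEquivProdArrow E E ι μ μ).symm.comp hswap)

lemma integral_pi_eq_integral_integral_piecewise (S : Finset ι) {f : (ι → E) → ℝ}
    (hf : Integrable f (Measure.pi μ)) :
    ∫ ω, f ω ∂Measure.pi μ =
      ∫ ω', ∫ ω, f (S.piecewise ω' ω) ∂Measure.pi μ ∂Measure.pi μ := by
  have hS := measurePreserving_piecewise μ S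
  rw [← integral_prod (fun z => f (S.piecewise z.1 z.2)) (hS.integrable_comp_of_integrable hf),
    integral_comp_of_measurePreserving hS hf.aestronglyMeasurable]

lemma integral_pi_le_of_integral_piecewise_le (S : Finset ι) {f : (ι → E) → ℝ}
    (hf : Integrable f (Measure.pi μ)) {A : Set (ι → E)} (hA : MeasurableSet A) {c K : ℝ}
    (hfA : ∀ ω', ∫ ω, f (S.piecewise ω' ω) ∂Measure.pi μ ≤ A.indicator (fun _ => c) ω' + K) :
    ∫ ω, f ω ∂Measure.pi μ ≤ c * (Measure.pi μ).real A + K := by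
  have hcond : Integrable (fun ω' => ∫ ω, f (S.piecewise ω' ω) ∂Measure.pi μ) (Measure.pi μ) :=
    ((measurePreserving_piecewise μ S).integrable_comp_of_integrable hf).integral_prod_left
  have hind : Integrable (A.indicator fun _ => c) (Measure.pi μ) :=
    (integrable_const c).indicator hA
  rw [integral_pi_eq_integral_integral_piecewise μ S hf]
  calc ∫ ω', ∫ ω, f (S.piecewise ω' ω) ∂Measure.pi μ ∂Measure.pi μ
      ≤ ∫ ω', (A.indicator (fun _ => c) ω' + K) ∂Measure.pi μ :=
        integral_mono hcond (hind.add (integrable_const K)) hfA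
    _ = c * (Measure.pi μ).real A + K := by
        rw [integral_add hind (integrable_const K), integral_indicator_const c hA, smul_eq_mul,
          mul_comm, integral_const, probReal_univ, one_smul]

variable {μ}

lemma abs_integral_update_sub_integral_le {f : (ι → E) → ℝ} (hf : Measurable f) {a : ℝ}
    (ha : ∀ ω ω', |f ω - f ω'| ≤ a) {k : ι} {B : Set E} (hB : MeasurableSet B)
    (hfB : UpdateInvariantOff f k B) {y : E} (hy : y ∉ B) :
    |∫ ω, f (Function.update ω k y) ∂Measure.pi μ - ∫ ω, f ω ∂Measure.pi μ| ≤
      a * (μ k).real B := by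
  have hpointwise (ω : ι → E) :
      |f (Function.update ω k y) - f ω| ≤ B.indicator (fun _ => a) (ω k) := by
    by_cases hω : ω k ∈ B
    · simpa [hω] using ha _ _
    · simpa [hω, sub_eq_zero] using hfB ω y (ω k) hy hω
  have hupdate : Measurable fun ω : ι → E => f (Function.update ω k y) :=
    hf.comp measurable_update_left
  have hind : Integrable (B.indicator fun _ => a) (μ k) := (integrable_const a).indicator hB
  rw [← integral_sub ((memLp_of_abs_sub_le hupdate.aestronglyMeasurable (fun _ _ => ha _ _)
    1).integrable le_rfl) ((memLp_of_abs_sub_le hf.aestronglyMeasurable ha 1).integrable le_rfl)]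
  calc |∫ ω, (f (Function.update ω k y) - f ω) ∂Measure.pi μ|
      ≤ ∫ ω, B.indicator (fun _ => a) (ω k) ∂Measure.pi μ :=
        norm_integral_le_of_norm_le (f := fun ω => f (Function.update ω k y) - f ω)
          (integrable_comp_eval (μ := μ) (i := k) hind) (ae_of_all _ hpointwise)
    _ = a * (μ k).real B := by
        rw [integral_comp_eval (μ := μ) (i := k) hind.aestronglyMeasurable,
          integral_indicator_const a hB, smul_eq_mul, mul_comm]

section Covariance

variable {f g : (ι → E) → ℝ} {a b : ℝ}

-- Swapping the `k`-th pair turns `F` into its partner term, and `F + F ∘ swapAt k` is a product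
-- of increments of `f` and `g` at `k`, which vanishes unless the pair meets both `B₁` and `B₂`.
lemma abs_integral_interpolate_sub_insert_le (hf : Measurable f) (hg : Measurable g)
    (hfa : ∀ ω ω', |f ω - f ω'| ≤ a) (hgb : ∀ ω ω', |g ω - g ω'| ≤ b) {k : ι} {B₁ B₂ : Set E}
    (hB₁ : MeasurableSet B₁) (hB₂ : MeasurableSet B₂) (hB : Disjoint B₁ B₂)
    (hfB : UpdateInvariantOff f k B₁) (hgB : UpdateInvariantOff g k B₂)
    {S : Finset ι} (hk : k ∉ S) :
    |∫ z, f (interpolate ∅ z) * (g (interpolate S z) - g (interpolate (insert k S) z))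
        ∂Measure.pi fun k => (μ k).prod (μ k)| ≤
      a * b * ((μ k).real B₁ * (μ k).real B₂) := by
  set ν := Measure.pi fun k => (μ k).prod (μ k)
  set F : (ι → E × E) → ℝ := fun z =>
    f (interpolate ∅ z) * (g (interpolate S z) - g (interpolate (insert k S) z)) with hF
  set H : E × E → ℝ := fun x =>
    (B₁ ×ˢ B₂).indicator (fun _ => a * b) x + (B₂ ×ˢ B₁).indicator (fun _ => a * b) x with hH
  have hmemLp {h : (ι → E) → ℝ} {c : ℝ} (hh : Measurable h) (hc : ∀ ω ω', |h ω - h ω'| ≤ c)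
      (S : Finset ι) : MemLp (fun z => h (interpolate S z)) 2 ν :=
    (memLp_of_abs_sub_le hh.aestronglyMeasurable hc 2).comp_measurePreserving
      (measurePreserving_interpolate μ S)
  have hFint : Integrable F ν :=
    (hmemLp hf hfa ∅).integrable_mul ((hmemLp hg hgb S).sub (hmemLp hg hgb (insert k S)))
  have hHint : Integrable H ((μ k).prod (μ k)) :=
    ((integrable_const _).indicator (hB₁.prod hB₂)).add
      ((integrable_const _).indicator (hB₂.prod hB₁))
  have hsymm (z : ι → E × E) : |F z + F (swapAt k z)| ≤ H (z k) := by
    have hprod := abs_update_sub_mul_update_sub_le hfa hgb hB hfB hgB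
      (interpolate ∅ z) (interpolate S z) (z k)
    rw [update_interpolate_fst _ (Finset.notMem_empty k), update_interpolate_fst _ hk,
      update_interpolate_snd, update_interpolate_snd] at hprod
    refine le_of_eq_of_le (congrArg _ ?_) hprod
    simp only [hF, interpolate_swapAt _ (Finset.notMem_empty k), interpolate_swapAt _ hk,
      interpolate_insert_swapAt _ hk]
    ring
  have hHeval : ∫ z, H (z k) ∂ν = ∫ x, H x ∂(μ k).prod (μ k) :=
    integral_comp_eval (μ := fun k => (μ k).prod (μ k)) hHint.aestronglyMeasurable
  refine (abs_integral_le_of_abs_add_comp_le (measurePreserving_swapAt μ k) hFint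
    (integrable_comp_eval hHint) hsymm).trans_eq ?_
  rw [hHeval, hH, integral_add ((integrable_const _).indicator (hB₁.prod hB₂))
    ((integrable_const _).indicator (hB₂.prod hB₁)), integral_indicator_const _ (hB₁.prod hB₂),
    integral_indicator_const _ (hB₂.prod hB₁), measureReal_prod_prod, measureReal_prod_prod,
    smul_eq_mul, smul_eq_mul]
  ring

lemma covariance_pi_eq_integral_interpolate (hf : MemLp f 2 (Measure.pi μ))
    (hg : MemLp g 2 (Measure.pi μ)) :
    cov[f, g; Measure.pi μ] =
      ∫ z, f (interpolate ∅ z) * g (interpolate ∅ z) ∂(Measure.pi fun k => (μ k).prod (μ k)) -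
      ∫ z, f (interpolate ∅ z) * g (interpolate Finset.univ z)
        ∂(Measure.pi fun k => (μ k).prod (μ k)) := by
  have hpair := measurePreserving_arrowProdEquivProdArrow E E ι μ μ
  have hsame : ∫ z, f (interpolate ∅ z) * g (interpolate ∅ z)
      ∂(Measure.pi fun k => (μ k).prod (μ k)) = ∫ ω, f ω * g ω ∂Measure.pi μ :=
    integral_comp_of_measurePreserving (measurePreserving_interpolate μ ∅)
      (hf.integrable_mul hg).aestronglyMeasurable
  have hindep : ∫ z, f (interpolate ∅ z) * g (interpolate Finset.univ z)
      ∂(Measure.pi fun k => (μ k).prod (μ k)) =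
      (∫ ω, f ω ∂Measure.pi μ) * ∫ ω, g ω ∂Measure.pi μ := by
    rw [← integral_prod_mul, ← hpair.integral_comp']
    simp [interpolate, MeasurableEquiv.arrowProdEquivProdArrow, Equiv.arrowProdEquivProdArrow]
  rw [covariance_eq_sub hf hg, hsame, hindep]
  rfl

theorem abs_covariance_pi_le_of_disjoint {B₁ B₂ : ι → Set E} (hf : Measurable f)
    (hg : Measurable g) (hfa : ∀ ω ω', |f ω - f ω'| ≤ a) (hgb : ∀ ω ω', |g ω - g ω'| ≤ b)
    (hB₁ : ∀ k, MeasurableSet (B₁ k)) (hB₂ : ∀ k, MeasurableSet (B₂ k))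
    (hB : ∀ k, Disjoint (B₁ k) (B₂ k)) (hfB : ∀ k, UpdateInvariantOff f k (B₁ k))
    (hgB : ∀ k, UpdateInvariantOff g k (B₂ k)) :
    |cov[f, g; Measure.pi μ]| ≤ a * b * ∑ k, (μ k).real (B₁ k) * (μ k).real (B₂ k) := by
  set ν := Measure.pi fun k => (μ k).prod (μ k)
  have hfL : MemLp f 2 (Measure.pi μ) := memLp_of_abs_sub_le hf.aestronglyMeasurable hfa 2
  have hgL : MemLp g 2 (Measure.pi μ) := memLp_of_abs_sub_le hg.aestronglyMeasurable hgb 2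
  have hint (S : Finset ι) :
      Integrable (fun z => f (interpolate ∅ z) * g (interpolate S z)) ν :=
    (hfL.comp_measurePreserving (measurePreserving_interpolate μ ∅)).integrable_mul
      (hgL.comp_measurePreserving (measurePreserving_interpolate μ S))
  have htelescope (S : Finset ι) : |∫ z, f (interpolate ∅ z) * g (interpolate ∅ z) ∂ν -
      ∫ z, f (interpolate ∅ z) * g (interpolate S z) ∂ν| ≤
      ∑ k ∈ S, a * b * ((μ k).real (B₁ k) * (μ k).real (B₂ k)) := by
    induction S using Finset.induction_on with
    | empty => simp
    | insert k S hk ih =>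
      have hstep := abs_integral_interpolate_sub_insert_le hf hg hfa hgb (hB₁ k) (hB₂ k) (hB k)
        (hfB k) (hgB k) hk (μ := μ)
      simp only [mul_sub] at hstep
      rw [integral_sub (hint S) (hint (insert k S))] at hstep
      rw [Finset.sum_insert hk, add_comm]
      exact (abs_sub_le _ _ _).trans (add_le_add ih hstep)
  rw [covariance_pi_eq_integral_interpolate hfL hgL, Finset.mul_sum]
  exact htelescope Finset.univ

end Covariance

end ProductSpace

lemma variance_average_le {Ω ι : Type*} [MeasurableSpace Ω] {P : Measure Ω} [IsFiniteMeasure P]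
    [Fintype ι] {X : ι → Ω → ℝ} (hX : ∀ i, MemLp (X i) 2 P) {V K : ℝ}
    (hV : ∀ i, Var[X i; P] ≤ V) (hK : 0 ≤ K) (hcov : ∀ i j, i ≠ j → cov[X i, X j; P] ≤ K) :
    Var[fun ω => (1 / Fintype.card ι : ℝ) * ∑ i, X i ω; P] ≤ V / Fintype.card ι + K := by
  have hpair (i j : ι) : cov[X i, X j; P] ≤ (if i = j then V else 0) + K := by
    split_ifs with h
    · rw [← h, covariance_self (hX i).aemeasurable]
      exact (hV i).trans (le_add_of_nonneg_right hK)
    · rw [zero_add]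
      exact hcov i j h
  have hsum : ∑ i, ∑ j, cov[X i, X j; P] ≤ Fintype.card ι * (V + Fintype.card ι * K) := by
    refine (Finset.sum_le_sum fun i _ => Finset.sum_le_sum fun j _ => hpair i j).trans_eq ?_
    simp [Finset.sum_add_distrib, mul_add]
  rw [variance_const_mul, variance_fun_sum hX]
  obtain h | h := (Nat.cast_nonneg (α := ℝ) (Fintype.card ι)).eq_or_lt
  · simpa [← h] using hK
  · refine (mul_le_mul_of_nonneg_left hsum (by positivity)).trans_eq ?_
    field_simp

section ClosedBall

variable {T : Type*} [AddGroup T] [PseudoMetricSpace T] [IsIsometricVAdd T T] [MeasurableSpace T]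
  [MeasurableAdd T]

lemma measure_closedBall_eq (μ : Measure T) [μ.IsAddLeftInvariant] (x : T)
    (s : ℝ) : μ (closedBall x s) = μ (closedBall 0 s) := by
  rw [← measure_preimage_add μ x (closedBall x s),
    preimage_add_left_closedBall, neg_add_cancel]

lemma measureReal_dist_le_eq {ι : Type*} [Fintype ι] [OpensMeasurableSpace T]
    [SecondCountableTopology T] (μ : Measure T) [IsProbabilityMeasure μ] [μ.IsAddLeftInvariant]
    {i j : ι} (hij : i ≠ j) (s : ℝ) :
    (Measure.pi fun _ : ι => μ).real {ω | dist (ω i) (ω j) ≤ s} = μ.real (closedBall 0 s) := by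
  have hclosed : MeasurableSet {z : T × T | dist z.1 z.2 ≤ s} :=
    measurableSet_le measurable_dist measurable_const
  have hpair : (Measure.pi fun _ : ι => μ).map (fun ω => (ω i, ω j)) = μ.prod μ := by
    have hindep : IndepFun (fun ω : ι → T => ω i) (fun ω => ω j) (Measure.pi fun _ => μ) :=
      (iIndepFun_pi (X := fun _ => id) fun _ => aemeasurable_id).indepFun hij
    rw [(indepFun_iff_map_prod_eq_prod_map_map (measurable_pi_apply i).aemeasurable
      (measurable_pi_apply j).aemeasurable).1 hindep,
      (measurePreserving_eval (fun _ : ι => μ) i).map_eq,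
      (measurePreserving_eval (fun _ : ι => μ) j).map_eq]
  have hslice (x : T) : μ (Prod.mk x ⁻¹' {z : T × T | dist z.1 z.2 ≤ s}) =
      μ (closedBall 0 s) := by
    rw [← measure_closedBall_eq μ x]
    congr 1 with z
    exact mem_closedBall'.symm
  have hpre : {ω : ι → T | dist (ω i) (ω j) ≤ s} =
      (fun ω => (ω i, ω j)) ⁻¹' {z | dist z.1 z.2 ≤ s} := rfl
  rw [hpre, ← map_measureReal_apply (by fun_prop) hclosed, hpair, measureReal_def,
    Measure.prod_apply hclosed]
  simp only [hslice, lintegral_const, measure_univ, mul_one, measureReal_def]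

end ClosedBall

section LocalFunctional

variable {ι T : Type*} [Fintype ι] [DecidableEq T]

/-- The value `ψ(ω_i, {ω_k : k ∈ ι})` of the functional `ψ` at the `i`-th point of the
configuration `ω`. -/
def siteValue (ψ : T → Finset T → ℝ) (i : ι) (ω : ι → T) : ℝ :=
  ψ (ω i) (Finset.univ.image ω)

lemma siteValue_comp_equiv (ψ : T → Finset T → ℝ) (e : ι ≃ ι) (i : ι) (ω : ι → T) :
    siteValue ψ i (ω ∘ e) = siteValue ψ (e i) ω := by
  rw [siteValue, ← Finset.image_image, Finset.image_univ_equiv]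
  rfl

lemma integral_siteValue_eq [MeasurableSpace T] (μ : Measure T) [SigmaFinite μ]
    (ψ : T → Finset T → ℝ) (i j : ι) :
    ∫ ω, siteValue ψ i ω ∂Measure.pi (fun _ => μ) =
      ∫ ω, siteValue ψ j ω ∂Measure.pi (fun _ => μ) := by
  have hswap := measurePreserving_piCongrLeft (fun _ : ι => μ) (Equiv.swap i j)
  rw [← hswap.integral_comp']
  congr 1 with ω
  have hcomp : MeasurableEquiv.piCongrLeft (fun _ : ι => T) (Equiv.swap i j) ω =
      ω ∘ Equiv.swap i j := by
    ext k
    simpa [MeasurableEquiv.coe_piCongrLeft] using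
      Equiv.piCongrLeft_apply_apply (fun _ : ι => T) (Equiv.swap i j) ω (Equiv.swap i j k)
  rw [hcomp, siteValue_comp_equiv, Equiv.swap_apply_left]

lemma measurable_siteValue_piecewise [MeasurableSpace T] {ψ : T → Finset T → ℝ} {i : ι}
    (hmeas : Measurable (siteValue ψ i)) (S : Finset ι) (ω' : ι → T) :
    Measurable fun ω => siteValue ψ i (S.piecewise ω' ω) := by
  refine hmeas.comp (measurable_pi_lambda _ fun k => ?_)
  by_cases hk : k ∈ S <;> simp only [Finset.piecewise, hk, if_true, if_false] <;> fun_prop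

/-- A translation-invariant functional `ψ` on pairs `(x, 𝒳)` with `x ∈ 𝒳`, of radius `r`, bounded
by `M` in absolute value and with values in an interval of length `R`. -/
structure IsLocalFunctional [AddGroup T] [PseudoMetricSpace T] (ψ : T → Finset T → ℝ)
    (r M R : ℝ) : Prop where
  map_add : ∀ x 𝒳, x ∈ 𝒳 → ∀ y, ψ (y + x) (𝒳.image (y + ·)) = ψ x 𝒳
  map_filter : ∀ x 𝒳, x ∈ 𝒳 → ψ x {z ∈ 𝒳 | dist x z ≤ r} = ψ x 𝒳
  abs_apply_le : ∀ x 𝒳, x ∈ 𝒳 → |ψ x 𝒳| ≤ M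
  apply_sub_apply_le : ∀ x x' 𝒳 𝒳', x ∈ 𝒳 → x' ∈ 𝒳' → ψ x 𝒳 - ψ x' 𝒳' ≤ R

variable [AddGroup T] [PseudoMetricSpace T] {ψ : T → Finset T → ℝ} {r M R : ℝ}

namespace IsLocalFunctional

lemma bound_nonneg (hψ : IsLocalFunctional ψ r M R) : 0 ≤ M :=
  (abs_nonneg _).trans (hψ.abs_apply_le 0 {0} (Finset.mem_singleton_self 0))

lemma range_nonneg (hψ : IsLocalFunctional ψ r M R) : 0 ≤ R := by
  simpa using hψ.apply_sub_apply_le 0 0 {0} {0} (Finset.mem_singleton_self 0)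
    (Finset.mem_singleton_self 0)

lemma abs_siteValue_le (hψ : IsLocalFunctional ψ r M R) (i : ι) (ω : ι → T) :
    |siteValue ψ i ω| ≤ M :=
  hψ.abs_apply_le _ _ (Finset.mem_image_of_mem _ (Finset.mem_univ i))

lemma abs_siteValue_sub_le (hψ : IsLocalFunctional ψ r M R) (i : ι) (ω ω' : ι → T) :
    |siteValue ψ i ω - siteValue ψ i ω'| ≤ R := by
  have hmem (ω : ι → T) : ω i ∈ Finset.univ.image ω :=
    Finset.mem_image_of_mem _ (Finset.mem_univ i)
  rw [abs_sub_le_iff]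
  exact ⟨hψ.apply_sub_apply_le _ _ _ _ (hmem ω) (hmem ω'),
    hψ.apply_sub_apply_le _ _ _ _ (hmem ω') (hmem ω)⟩

lemma abs_siteValue_sub_le_two_mul (hψ : IsLocalFunctional ψ r M R) (i : ι) (ω ω' : ι → T) :
    |siteValue ψ i ω - siteValue ψ i ω'| ≤ 2 * M := by
  linarith [abs_sub (siteValue ψ i ω) (siteValue ψ i ω'), hψ.abs_siteValue_le i ω,
    hψ.abs_siteValue_le i ω']

lemma siteValue_const_add (hψ : IsLocalFunctional ψ r M R) (i : ι) (y : T) (ω : ι → T) :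
    siteValue ψ i (fun k => y + ω k) = siteValue ψ i ω := by
  rw [siteValue, siteValue,
    ← hψ.map_add _ _ (Finset.mem_image_of_mem ω (Finset.mem_univ i)) y, Finset.image_image]
  rfl

lemma siteValue_update_of_notMem_closedBall (hψ : IsLocalFunctional ψ r M R) {i k : ι}
    (hki : k ≠ i) {ω : ι → T} {u : T} (hu : u ∉ closedBall (ω i) r) :
    siteValue ψ i (Function.update ω k u) =
      ψ (ω i) {z ∈ (Finset.univ.erase k).image ω | dist (ω i) z ≤ r} := by
  have himage : Finset.univ.image (Function.update ω k u) =
      insert u ((Finset.univ.erase k).image ω) := by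
    rw [← Finset.insert_erase (Finset.mem_univ k), Finset.image_insert, Function.update_self,
      Finset.erase_insert (Finset.notMem_erase k _)]
    congr 1
    exact Finset.image_congr fun l hl => Function.update_of_ne (Finset.ne_of_mem_erase hl) _ _
  rw [siteValue, ← hψ.map_filter _ _ (Finset.mem_image_of_mem _ (Finset.mem_univ i)), himage,
    Function.update_of_ne hki.symm, Finset.filter_insert,
    if_neg (by rwa [mem_closedBall, dist_comm] at hu)]

lemma updateInvariantOff_siteValue_piecewise (hψ : IsLocalFunctional ψ r M R) {i : ι}
    {S : Finset ι} (hi : i ∈ S) (ω' : ι → T) (k : ι) :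
    UpdateInvariantOff (fun ω => siteValue ψ i (S.piecewise ω' ω)) k (closedBall (ω' i) r) := by
  intro ω u v hu hv
  by_cases hk : k ∈ S
  · have (w : T) : S.piecewise ω' (Function.update ω k w) = S.piecewise ω' ω :=
      S.piecewise_congr (fun _ _ => rfl) fun l hl =>
        Function.update_of_ne (fun h : l = k => hl (h ▸ hk)) _ _
    simp only [this]
  · rw [← S.piecewise_eq_of_mem ω' ω hi] at hu hv
    have hki : k ≠ i := fun h => hk (h ▸ hi)
    simp only [← Finset.update_piecewise_of_notMem _ _ _ hk,
      hψ.siteValue_update_of_notMem_closedBall hki hu,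
      hψ.siteValue_update_of_notMem_closedBall hki hv]

end IsLocalFunctional

section Probability

variable [MeasurableSpace T]

variable {μ : Measure T} [IsProbabilityMeasure μ]

namespace IsLocalFunctional

lemma integral_siteValue_update (hψ : IsLocalFunctional ψ r M R) [MeasurableAdd T]
    [μ.IsAddLeftInvariant] (i : ι) (x y : T) :
    ∫ ω, siteValue ψ i (Function.update ω i x) ∂Measure.pi (fun _ => μ) =
      ∫ ω, siteValue ψ i (Function.update ω i y) ∂Measure.pi (fun _ => μ) := by
  have htranslate (ω : ι → T) : siteValue ψ i (Function.update ω i x) =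
      siteValue ψ i (Function.update ((fun _ => y + -x) + ω) i y) := by
    rw [← hψ.siteValue_const_add i (y + -x)]
    congr 1 with k
    obtain rfl | hk := eq_or_ne k i <;> simp [*]
  simp only [htranslate]
  exact integral_add_left_eq_self (fun ω => siteValue ψ i (Function.update ω i y)) _

lemma integral_siteValue_piecewise_singleton (hψ : IsLocalFunctional ψ r M R) [MeasurableAdd T]
    [μ.IsAddLeftInvariant] {i : ι} (hmeas : Measurable (siteValue ψ i)) (ω' : ι → T) :
    ∫ ω, siteValue ψ i (({i} : Finset ι).piecewise ω' ω) ∂Measure.pi (fun _ => μ) =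
      ∫ ω, siteValue ψ i ω ∂Measure.pi (fun _ => μ) := by
  have hint : Integrable (siteValue ψ i) (Measure.pi fun _ => μ) :=
    Integrable.of_bound hmeas.aestronglyMeasurable M (ae_of_all _ (hψ.abs_siteValue_le i))
  rw [integral_pi_eq_integral_integral_piecewise (fun _ => μ) {i} hint]
  simp only [Finset.piecewise_singleton]
  simp [fun η : ι → T => hψ.integral_siteValue_update (μ := μ) i (η i) (ω' i)]

end IsLocalFunctional

variable [IsIsometricVAdd T T] [OpensMeasurableSpace T] [MeasurableAdd T] [μ.IsAddLeftInvariant]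

namespace IsLocalFunctional

lemma abs_integral_siteValue_piecewise_pair_le (hψ : IsLocalFunctional ψ r M R) {i j : ι}
    (hij : i ≠ j) (hmeas : Measurable (siteValue ψ i))
    (hmean : ∫ ω, siteValue ψ i ω ∂Measure.pi (fun _ => μ) = 0) {ω' : ι → T}
    (hfar : r < dist (ω' j) (ω' i)) :
    |∫ ω, siteValue ψ i (({i, j} : Finset ι).piecewise ω' ω) ∂Measure.pi (fun _ => μ)| ≤
      R * μ.real (closedBall 0 r) := by
  have hbound := abs_integral_update_sub_integral_le (μ := fun _ => μ)
    (measurable_siteValue_piecewise hmeas {i} ω') (fun _ _ => hψ.abs_siteValue_sub_le i _ _)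
    measurableSet_closedBall
    (hψ.updateInvariantOff_siteValue_piecewise (Finset.mem_singleton_self i) ω' j)
    (y := ω' j) (by simpa using hfar)
  have hpair (ω : ι → T) : ({i} : Finset ι).piecewise ω' (Function.update ω j (ω' j)) =
      ({i, j} : Finset ι).piecewise ω' ω := by
    rw [Finset.pair_comm, Finset.piecewise_insert,
      Finset.update_piecewise_of_notMem _ _ _ (by simpa using hij.symm)]
  simpa only [hpair, hψ.integral_siteValue_piecewise_singleton hmeas, hmean, sub_zero,
    measureReal_def, measure_closedBall_eq μ (ω' i)] using hbound

-- Conditionally on two points more than `2 * r` apart, the two site values depend on the remaining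
-- points through disjoint balls.
lemma integral_siteValue_mul_piecewise_pair_le (hψ : IsLocalFunctional ψ r M R) {i j : ι}
    (hij : i ≠ j) (hmeas : ∀ i : ι, Measurable (siteValue ψ i))
    (hmean : ∀ i : ι, ∫ ω, siteValue ψ i ω ∂Measure.pi (fun _ => μ) = 0) (hr : 0 ≤ r)
    {ω' : ι → T} (hfar : 2 * r < dist (ω' i) (ω' j)) :
    ∫ ω, siteValue ψ i (({i, j} : Finset ι).piecewise ω' ω) *
        siteValue ψ j (({i, j} : Finset ι).piecewise ω' ω) ∂Measure.pi (fun _ => μ) ≤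
      M * R * (μ.real (closedBall 0 r) +
        2 * Fintype.card ι * μ.real (closedBall 0 r) ^ 2) := by
  set P : Measure (ι → T) := Measure.pi fun _ => μ
  set f : ι → (ι → T) → ℝ := fun k ω => siteValue ψ k (({i, j} : Finset ι).piecewise ω' ω)
  have hfmeas (k : ι) : Measurable (f k) := measurable_siteValue_piecewise (hmeas k) _ ω'
  have hfabs (k : ι) (ω : ι → T) : |f k ω| ≤ M := hψ.abs_siteValue_le k _
  have hfLp (k : ι) : MemLp (f k) 2 P :=
    MemLp.of_bound (hfmeas k).aestronglyMeasurable M (ae_of_all _ (hfabs k))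
  have hcov : cov[f i, f j; P] ≤ 2 * M * R * (Fintype.card ι * μ.real (closedBall 0 r) ^ 2) := by
    have hdisj : Disjoint (closedBall (ω' i) r) (closedBall (ω' j) r) :=
      closedBall_disjoint_closedBall (by linarith)
    refine (le_abs_self _).trans ((abs_covariance_pi_le_of_disjoint (μ := fun _ => μ)
      (hfmeas i) (hfmeas j) (fun _ _ => hψ.abs_siteValue_sub_le_two_mul i _ _)
      (fun _ _ => hψ.abs_siteValue_sub_le j _ _) (fun _ => measurableSet_closedBall)
      (fun _ => measurableSet_closedBall) (fun _ => hdisj)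
      (hψ.updateInvariantOff_siteValue_piecewise (by simp) ω')
      (hψ.updateInvariantOff_siteValue_piecewise (by simp) ω')).trans_eq ?_)
    simp [measureReal_def, measure_closedBall_eq μ (ω' _), sq]
  have hmeans : (∫ ω, f i ω ∂P) * ∫ ω, f j ω ∂P ≤ R * μ.real (closedBall 0 r) * M := by
    have hi := hψ.abs_integral_siteValue_piecewise_pair_le hij (hmeas i) (hmean i)
      (ω' := ω') (by rw [dist_comm]; linarith)
    have hj : |∫ ω, f j ω ∂P| ≤ M := by
      simpa using norm_integral_le_of_norm_le_const (μ := P) (f := f j) (ae_of_all _ (hfabs j))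
    refine (le_abs_self _).trans ?_
    rw [abs_mul]
    exact mul_le_mul hi hj (abs_nonneg _) ((abs_nonneg _).trans hi)
  have hsplit := covariance_eq_sub (hfLp i) (hfLp j)
  simp only [Pi.mul_apply] at hsplit
  linarith

lemma integral_siteValue_mul_le [SecondCountableTopology T] (hψ : IsLocalFunctional ψ r M R)
    {i j : ι} (hij : i ≠ j) (hmeas : ∀ i : ι, Measurable (siteValue ψ i))
    (hmean : ∀ i : ι, ∫ ω, siteValue ψ i ω ∂Measure.pi (fun _ => μ) = 0) (hr : 0 ≤ r) :
    ∫ ω, siteValue ψ i ω * siteValue ψ j ω ∂Measure.pi (fun _ => μ) ≤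
      M ^ 2 * μ.real (closedBall 0 (2 * r)) + M * R * (μ.real (closedBall 0 r) +
        2 * Fintype.card ι * μ.real (closedBall 0 r) ^ 2) := by
  set P : Measure (ι → T) := Measure.pi fun _ => μ
  set K := M * R * (μ.real (closedBall 0 r) + 2 * Fintype.card ι * μ.real (closedBall 0 r) ^ 2)
  set G : (ι → T) → ℝ := fun ω => siteValue ψ i ω * siteValue ψ j ω
  set near : Set (ι → T) := {ω | dist (ω i) (ω j) ≤ 2 * r}
  have hM := hψ.bound_nonneg
  have hR := hψ.range_nonneg
  have hK : 0 ≤ K := by positivity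
  have hGabs (ω : ι → T) : |G ω| ≤ M ^ 2 := by
    rw [abs_mul, sq]
    exact mul_le_mul (hψ.abs_siteValue_le i ω) (hψ.abs_siteValue_le j ω) (abs_nonneg _) hM
  have hGint : Integrable G P :=
    Integrable.of_bound ((hmeas i).mul (hmeas j)).aestronglyMeasurable _ (ae_of_all _ hGabs)
  have hnear : MeasurableSet near := measurableSet_le
    ((measurable_pi_apply i).dist (measurable_pi_apply j)) measurable_const
  have hcond (ω' : ι → T) : ∫ ω, G (({i, j} : Finset ι).piecewise ω' ω) ∂P ≤
      near.indicator (fun _ => M ^ 2) ω' + K := by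
    by_cases hω' : ω' ∈ near
    · have hbound := norm_integral_le_of_norm_le_const (μ := P)
        (f := fun ω => G (({i, j} : Finset ι).piecewise ω' ω)) (ae_of_all _ fun _ => hGabs _)
      rw [probReal_univ, mul_one] at hbound
      rw [indicator_of_mem hω']
      exact (le_abs_self _).trans (hbound.trans (le_add_of_nonneg_right hK))
    · rw [indicator_of_notMem hω', zero_add]
      exact hψ.integral_siteValue_mul_piecewise_pair_le hij hmeas hmean hr (not_le.1 hω')
  rw [← measureReal_dist_le_eq μ hij]
  exact integral_pi_le_of_integral_piecewise_le (fun _ => μ) {i, j} hGint hnear hcond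

theorem variance_average_siteValue_le [SecondCountableTopology T]
    (hψ : IsLocalFunctional ψ r M R) (hmeas : ∀ i : ι, Measurable (siteValue ψ i)) {i₀ : ι}
    (hmean : ∫ ω, siteValue ψ i₀ ω ∂Measure.pi (fun _ => μ) = 0) (hr : 0 ≤ r) :
    Var[fun ω => (1 / Fintype.card ι : ℝ) * ∑ i : ι, siteValue ψ i ω; Measure.pi fun _ => μ] ≤
      M ^ 2 * (1 / Fintype.card ι + μ.real (closedBall 0 (2 * r))) +
        M * R * (μ.real (closedBall 0 r) +
          2 * Fintype.card ι * μ.real (closedBall 0 r) ^ 2) := by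
  set P : Measure (ι → T) := Measure.pi fun _ => μ
  have hmean' (i : ι) : ∫ ω, siteValue ψ i ω ∂P = 0 :=
    (integral_siteValue_eq μ ψ i i₀).trans hmean
  have hLp (i : ι) : MemLp (siteValue ψ i) 2 P :=
    MemLp.of_bound (hmeas i).aestronglyMeasurable M (ae_of_all _ (hψ.abs_siteValue_le i))
  have hM := hψ.bound_nonneg
  have hR := hψ.range_nonneg
  have hvar (i : ι) : Var[siteValue ψ i; P] ≤ M ^ 2 := by
    refine (variance_le_sq_of_bounded (ae_of_all _ fun ω => abs_le.1 (hψ.abs_siteValue_le i ω))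
      (hmeas i).aemeasurable).trans_eq (by ring)
  have hcov (i j : ι) (hij : i ≠ j) : cov[siteValue ψ i, siteValue ψ j; P] ≤
      M ^ 2 * μ.real (closedBall 0 (2 * r)) + M * R * (μ.real (closedBall 0 r) +
        2 * Fintype.card ι * μ.real (closedBall 0 r) ^ 2) := by
    rw [covariance_eq_sub (hLp i) (hLp j), hmean', zero_mul, sub_zero]
    exact hψ.integral_siteValue_mul_le hij hmeas hmean' hr
  refine (variance_average_le hLp hvar (by positivity) hcov).trans_eq ?_
  ring

end IsLocalFunctional

end Probability

end LocalFunctional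

section FlatTorus

lemma iInf_abs_sub_int_mul_eq_norm {L : ℝ} (hL : 0 < L) (a : ℝ) :
    ⨅ k : ℤ, |a - k * L| = ‖(a : AddCircle L)‖ := by
  have hscale (k : ℤ) : |a - k * L| = L * |L⁻¹ * a - k| := by
    rw [← abs_of_pos hL, ← abs_mul, abs_of_pos hL, mul_sub, mul_inv_cancel_left₀ hL.ne', mul_comm L]
  rw [AddCircle.norm_eq]
  refine le_antisymm (ciInf_le ⟨0, ?_⟩ (round (L⁻¹ * a))) (le_ciInf fun k => ?_)
  · rintro _ ⟨k, rfl⟩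
    exact abs_nonneg _
  · rw [hscale, hscale]
    exact mul_le_mul_of_nonneg_left (round_le (L⁻¹ * a) k) hL.le

/-- The torus `(ℝ / Lℤ)^d` with its Euclidean norm, as a topological group; the cube `[0, L)^d` with
the toroidal distance and addition is a fundamental domain of it. -/
abbrev FlatTorus (d : ℕ) (L : ℝ) : Type :=
  PiLp 2 fun _ : Fin d => AddCircle L

/-- The projection of `ℝ^d` onto the torus. -/
def torusMk {d : ℕ} (L : ℝ) (x : Fin d → ℝ) : FlatTorus d L :=
  WithLp.toLp 2 fun i => (x i : AddCircle L)

lemma torDist_eq_dist_torusMk {d : ℕ} {L : ℝ} (hL : 0 < L) (x y : Fin d → ℝ) :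
    torDist L x y = dist (torusMk L x) (torusMk L y) := by
  rw [PiLp.dist_eq_of_L2, torDist]
  simp only [iInf_abs_sub_int_mul_eq_norm hL, dist_eq_norm, torusMk, AddCircle.coe_sub]

lemma norm_torusMk_eq_norm_toLp {d : ℕ} {L : ℝ} (hL : 0 < L) {x : Fin d → ℝ}
    (hx : ∀ i, |x i| ≤ L / 2) : ‖torusMk L x‖ = ‖WithLp.toLp 2 x‖ := by
  have hcoord (i : Fin d) : ‖(x i : AddCircle L)‖ = ‖x i‖ :=
    (AddCircle.norm_coe_eq_abs_iff L hL.ne').2 (by rw [abs_of_pos hL]; exact hx i)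
  simp only [PiLp.norm_eq_of_L2, torusMk, hcoord]

lemma volume_real_closedBall_eq (d : ℕ) {r : ℝ} (hr : 0 ≤ r) :
    (volume : Measure (EuclideanSpace ℝ (Fin d))).real (closedBall 0 r) =
      unitBallVol d * r ^ d := by
  rw [measureReal_def, Measure.addHaar_closedBall' _ _ hr, finrank_euclideanSpace_fin,
    ENNReal.toReal_mul, ENNReal.toReal_ofReal (pow_nonneg hr d), mul_comm, unitBallVol]

/-- The normalised Haar measure of the torus: the volume measure inherited from the circles of
length `L`, divided by its total mass `L ^ d`. -/
def torusMeasure (d : ℕ) (L : ℝ) [Fact (0 < L)] : Measure (FlatTorus d L) :=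
  ((L.toNNReal ^ d)⁻¹ : ℝ≥0) •
    (volume : Measure (Fin d → AddCircle L)).map (WithLp.toLp 2)

variable {d : ℕ} {L : ℝ} [hL : Fact (0 < L)]

instance : (torusMeasure d L).IsAddLeftInvariant := by
  have : ((volume : Measure (Fin d → AddCircle L)).map (WithLp.toLp 2)).IsAddLeftInvariant :=
    isAddLeftInvariant_map (WithLp.addEquiv 2 (Fin d → AddCircle L)).symm.toAddHom
      (WithLp.measurable_toLp 2 _) (WithLp.addEquiv 2 _).symm.surjective
  exact isAddLeftInvariant_smul_nnreal _

lemma measurePreserving_torusMk (t : ℝ) :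
    MeasurePreserving (torusMk L) (((L.toNNReal ^ d)⁻¹ : ℝ≥0) •
      volume.restrict (Set.univ.pi fun _ : Fin d => Set.Ioc t (t + L))) (torusMeasure d L) := by
  rw [volume_pi, Measure.restrict_pi_pi]
  exact (((WithLp.measurable_toLp 2 _).measurePreserving _).comp
    (measurePreserving_pi _ _ fun _ => AddCircle.measurePreserving_mk L t)).smul_measure _

lemma uniformBox_eq_smul_restrict_Ioc (d : ℕ) (L : ℝ) :
    uniformBox d L = ((L.toNNReal ^ d)⁻¹ : ℝ≥0) •
      volume.restrict (Set.univ.pi fun _ : Fin d => Set.Ioc 0 (0 + L)) := by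
  simp only [uniformBox, box, volume_pi, Measure.restrict_pi_pi, zero_add,
    restrict_Ico_eq_restrict_Ioc]

instance : IsProbabilityMeasure (uniformBox d L) := by
  have hpos : L.toNNReal ^ d ≠ 0 := pow_ne_zero d (Real.toNNReal_pos.2 hL.out).ne'
  have hvol : volume (box d L) = (L.toNNReal ^ d : ℝ≥0) := by
    simp [box, volume_pi_pi, ENNReal.ofReal]
  constructor
  rw [uniformBox, Measure.smul_apply, Measure.restrict_apply_univ, hvol,
    ENNReal.smul_def, smul_eq_mul, ← ENNReal.coe_mul, inv_mul_cancel₀ hpos, ENNReal.coe_one]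

lemma measurePreserving_torusMk_uniformBox :
    MeasurePreserving (torusMk L) (uniformBox d L) (torusMeasure d L) :=
  uniformBox_eq_smul_restrict_Ioc d L ▸ measurePreserving_torusMk 0

instance : IsProbabilityMeasure (torusMeasure d L) := by
  have hmk : MeasurePreserving (torusMk L) (uniformBox d L) _ :=
    measurePreserving_torusMk_uniformBox
  rw [← hmk.map_eq]
  exact Measure.isProbabilityMeasure_map hmk.aemeasurable

lemma torusMeasure_real_closedBall_le {r : ℝ} (hr : 0 ≤ r) :
    (torusMeasure d L).real (closedBall 0 r) ≤ unitBallVol d * r ^ d / L ^ d := by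
  set D : Set (Fin d → ℝ) := Set.univ.pi fun _ => Set.Ioc (-(L / 2)) (-(L / 2) + L)
  set B : Set (Fin d → ℝ) := WithLp.toLp 2 ⁻¹' closedBall (0 : EuclideanSpace ℝ (Fin d)) r
  have hsub : torusMk L ⁻¹' closedBall 0 r ∩ D ⊆ B := by
    rintro x ⟨hx, hxD⟩
    have hcoord (i : Fin d) : |x i| ≤ L / 2 := by
      have := hxD i (mem_univ i)
      exact abs_le.2 ⟨this.1.le, by linarith [this.2]⟩
    rwa [mem_preimage, mem_closedBall_zero_iff, norm_torusMk_eq_norm_toLp hL.out hcoord,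
      ← mem_closedBall_zero_iff] at hx
  have hB : volume.real B = unitBallVol d * r ^ d := by
    rw [(PiLp.volume_preserving_toLp (Fin d)).measureReal_preimage
      measurableSet_closedBall.nullMeasurableSet, volume_real_closedBall_eq d hr]
  have hBfin : volume B ≠ ∞ := by
    rw [(PiLp.volume_preserving_toLp (Fin d)).measure_preimage
      measurableSet_closedBall.nullMeasurableSet]
    exact measure_closedBall_lt_top.ne
  rw [← (measurePreserving_torusMk (-(L / 2))).measureReal_preimage
    measurableSet_closedBall.nullMeasurableSet, measureReal_nnreal_smul_apply,
    measureReal_restrict_apply ((measurePreserving_torusMk (-(L / 2))).measurable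
      measurableSet_closedBall), ← hB, div_eq_inv_mul (volume.real B)]
  simp only [NNReal.coe_inv, NNReal.coe_pow, Real.coe_toNNReal _ hL.out.le]
  exact mul_le_mul_of_nonneg_left (measureReal_mono hsub hBfin)
    (inv_nonneg.2 (pow_nonneg hL.out.le d))

/-- The representative in the cube `[0, L)^d` of a point of the torus. -/
def boxRep (x : FlatTorus d L) : Fin d → ℝ :=
  fun i => AddCircle.equivIco L 0 (x i)

lemma boxRep_mem_box (x : FlatTorus d L) : boxRep x ∈ box d L := fun i _ => by
  simpa [boxRep] using (AddCircle.equivIco L 0 (x i)).2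

lemma torusMk_boxRep (x : FlatTorus d L) : torusMk L (boxRep x) = x :=
  PiLp.ext fun _ => AddCircle.coe_equivIco

lemma boxRep_torusMk {x : Fin d → ℝ} (hx : x ∈ box d L) : boxRep (torusMk L x) = x :=
  funext fun i => AddCircle.equivIco_coe_of_mem (by simpa using hx i (mem_univ i))

lemma torAdd_boxRep (y x : FlatTorus d L) : torAdd L (boxRep y) (boxRep x) = boxRep (y + x) := by
  ext i
  have hcoord : (y + x) i = ((boxRep y i + boxRep x i : ℝ) : AddCircle L) := by
    simp [boxRep]
  rw [boxRep, hcoord, AddCircle.coe_equivIco_mk_apply, torAdd, mul_comm]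

lemma torDist_boxRep (x y : FlatTorus d L) : torDist L (boxRep x) (boxRep y) = dist x y := by
  rw [torDist_eq_dist_torusMk hL.out, torusMk_boxRep, torusMk_boxRep]

lemma measurable_boxRep : Measurable (boxRep : FlatTorus d L → Fin d → ℝ) :=
  measurable_pi_lambda _ fun i => measurable_subtype_coe.comp
    ((AddCircle.measurableEquivIco L 0).measurable.comp (by fun_prop))

lemma measurePreserving_boxRep :
    MeasurePreserving (boxRep : FlatTorus d L → Fin d → ℝ) (torusMeasure d L)
      (uniformBox d L) := by
  have hmk : MeasurePreserving (torusMk L) (uniformBox d L) _ :=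
    measurePreserving_torusMk_uniformBox
  have hbox : MeasurableSet (box d L) := MeasurableSet.univ_pi fun _ => measurableSet_Ico
  have hid : boxRep ∘ torusMk L =ᵐ[uniformBox d L] id :=
    Measure.ae_smul_measure ((ae_restrict_mem hbox).mono fun _ hx => boxRep_torusMk hx) _
  refine ⟨measurable_boxRep, ?_⟩
  rw [← hmk.map_eq, Measure.map_map measurable_boxRep hmk.measurable, Measure.map_congr hid,
    Measure.map_id]

end FlatTorus

section Transfer

variable {d : ℕ} {L : ℝ} [hL : Fact (0 < L)] {ψ : (Fin d → ℝ) → Finset (Fin d → ℝ) → ℝ}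
  {r M R : ℝ}

/-- The functional on configurations in the torus that corresponds to a functional `ψ` on
configurations in the cube `[0, L)^d`. -/
def torusFunctional (L : ℝ) [Fact (0 < L)] (ψ : (Fin d → ℝ) → Finset (Fin d → ℝ) → ℝ)
    (x : FlatTorus d L) (𝒳 : Finset (FlatTorus d L)) : ℝ :=
  ψ (boxRep x) (𝒳.image boxRep)

lemma coe_image_boxRep_subset_box (𝒳 : Finset (FlatTorus d L)) :
    ↑(𝒳.image boxRep) ⊆ box d L := by
  rw [Finset.coe_image, image_subset_iff]
  exact fun x _ => boxRep_mem_box x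

lemma isLocalFunctional_torusFunctional (htrans : TransInvariant d L ψ) (hrad : HasRadius d L ψ r)
    (hM : ∀ x 𝒳, x ∈ 𝒳 → ↑𝒳 ⊆ box d L → |ψ x 𝒳| ≤ M)
    (hR : ∀ x x' 𝒳 𝒳', x ∈ 𝒳 → ↑𝒳 ⊆ box d L → x' ∈ 𝒳' → ↑𝒳' ⊆ box d L →
      ψ x 𝒳 - ψ x' 𝒳' ≤ R) :
    IsLocalFunctional (torusFunctional L ψ) r M R where
  map_add x 𝒳 hx y := by
    have himage : (𝒳.image (y + ·)).image boxRep =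
        (𝒳.image boxRep).image (torAdd L (boxRep y)) := by
      simp only [Finset.image_image, Function.comp_def, torAdd_boxRep]
    rw [torusFunctional, himage, ← torAdd_boxRep, torusFunctional]
    convert (htrans _ _ (Finset.mem_image_of_mem boxRep hx) (coe_image_boxRep_subset_box 𝒳) _
      (boxRep_mem_box y)).symm
  map_filter x 𝒳 hx := by
    have hfilter : ({z ∈ 𝒳 | dist x z ≤ r} : Finset _).image boxRep =
        {z ∈ 𝒳.image boxRep | z ∈ torBall L (boxRep x) r} := by
      rw [Finset.filter_image]
      simp only [torBall, mem_ofPred_eq, boxRep_mem_box, torDist_boxRep, true_and]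
    rw [torusFunctional, hfilter, torusFunctional]
    convert (hrad _ _ (Finset.mem_image_of_mem boxRep hx) (coe_image_boxRep_subset_box 𝒳)).symm
  abs_apply_le _ 𝒳 hx := hM _ _ (Finset.mem_image_of_mem _ hx) (coe_image_boxRep_subset_box 𝒳)
  apply_sub_apply_le _ _ 𝒳 𝒳' hx hx' :=
    hR _ _ _ _ (Finset.mem_image_of_mem _ hx) (coe_image_boxRep_subset_box 𝒳)
      (Finset.mem_image_of_mem _ hx') (coe_image_boxRep_subset_box 𝒳')

lemma siteValue_torusFunctional {ι : Type*} [Fintype ι] (i : ι) (η : ι → FlatTorus d L) :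
    siteValue (torusFunctional L ψ) i η = siteValue ψ i fun k => boxRep (η k) := by
  rw [siteValue, torusFunctional, Finset.image_image]
  rfl

theorem empirical_mean_variance_bound_general {ι : Type*} [Fintype ι]
    (hmeas : ∀ i : ι, Measurable (siteValue ψ i))
    (htrans : TransInvariant d L ψ) (hrad : HasRadius d L ψ r)
    (hM : ∀ x 𝒳, x ∈ 𝒳 → ↑𝒳 ⊆ box d L → |ψ x 𝒳| ≤ M)
    (hR : ∀ x x' 𝒳 𝒳', x ∈ 𝒳 → ↑𝒳 ⊆ box d L → x' ∈ 𝒳' → ↑𝒳' ⊆ box d L →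
      ψ x 𝒳 - ψ x' 𝒳' ≤ R) {i₀ : ι}
    (hmean : ∫ ω, siteValue ψ i₀ ω ∂Measure.pi (fun _ => uniformBox d L) = 0) (hr : 0 ≤ r) :
    Var[fun ω => (1 / Fintype.card ι : ℝ) * ∑ i : ι, siteValue ψ i ω;
        Measure.pi fun _ => uniformBox d L] ≤
      M ^ 2 * (1 / Fintype.card ι + unitBallVol d * (2 * r) ^ d / L ^ d) +
        M * R * (unitBallVol d * r ^ d / L ^ d +
          2 * Fintype.card ι * (unitBallVol d * r ^ d / L ^ d) ^ 2) := by
  have hψ := isLocalFunctional_torusFunctional htrans hrad hM hR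
  have hrep : MeasurePreserving (fun (η : ι → FlatTorus d L) k => boxRep (η k))
      (Measure.pi fun _ => torusMeasure d L) (Measure.pi fun _ => uniformBox d L) :=
    measurePreserving_pi _ _ fun _ => measurePreserving_boxRep
  have hM0 := hψ.bound_nonneg
  have hR0 := hψ.range_nonneg
  have hmeas' (i : ι) : Measurable (siteValue (torusFunctional L ψ) i) := by
    simpa only [Function.comp_def, ← siteValue_torusFunctional] using
      (hmeas i).comp hrep.measurable
  have hmean' : ∫ η, siteValue (torusFunctional L ψ) i₀ η
      ∂Measure.pi (fun _ => torusMeasure d L) = 0 := by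
    simp only [siteValue_torusFunctional]
    exact (integral_comp_of_measurePreserving hrep (hmeas i₀).aestronglyMeasurable).trans hmean
  have hbound := hψ.variance_average_siteValue_le hmeas' hmean' hr
  simp only [siteValue_torusFunctional] at hbound
  rw [hrep.variance_fun_comp (f := fun ω => (1 / Fintype.card ι : ℝ) * ∑ i : ι, siteValue ψ i ω)
    (by fun_prop)] at hbound
  refine hbound.trans ?_
  have hball {s : ℝ} (hs : 0 ≤ s) := torusMeasure_real_closedBall_le (d := d) (L := L) hs
  gcongr
  exacts [hball (by positivity), hball hr, hball hr]

end Transfer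

lemma sideLen_pos (d : ℕ) {n : ℕ} (hn : 1 ≤ n) : 0 < sideLen d n :=
  Real.rpow_pos_of_pos (by exact_mod_cast hn) _

lemma sideLen_pow {d : ℕ} (n : ℕ) (hd : 1 ≤ d) : sideLen d n ^ d = n :=
  Real.rpow_inv_natCast_pow n.cast_nonneg (Nat.one_le_iff_ne_zero.1 hd)

lemma variance_bound_le_of_lt {M R n φ : ℝ} (hMR : 0 ≤ M * R) (hφ₀ : 0 ≤ φ) (hφ : φ < n)
    (D : ℝ) :
    M ^ 2 * (1 / n + D * φ / n) + M * R * (φ / n + 2 * n * (φ / n) ^ 2) ≤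
      M ^ 2 / n * (1 + D * φ) + M / n * (φ + φ ^ 2 * ((2 * n - φ) / (n - φ))) * R := by
  have hn : 0 < n := hφ₀.trans_lt hφ
  have htwo : 2 ≤ (2 * n - φ) / (n - φ) := by
    rw [le_div_iff₀ (by linarith)]
    linarith
  calc M ^ 2 * (1 / n + D * φ / n) + M * R * (φ / n + 2 * n * (φ / n) ^ 2)
      = M ^ 2 / n * (1 + D * φ) + M * R / n * (φ + φ ^ 2 * 2) := by field_simp
    _ ≤ M ^ 2 / n * (1 + D * φ) + M * R / n * (φ + φ ^ 2 * ((2 * n - φ) / (n - φ))) := by gcongr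
    _ = M ^ 2 / n * (1 + D * φ) + M / n * (φ + φ ^ 2 * ((2 * n - φ) / (n - φ))) * R := by ring

/-- Lemma 3.5 (Goldstein–Penrose): variance bound for the empirical mean of a centered,
bounded, translation-invariant functional of finite radius.  Here `M` is a bound for
`‖ψ_1‖` and `R` a bound for `rng(ψ_1)`. -/
theorem empirical_mean_variance_bound (d n : ℕ) (hd : 1 ≤ d) (hn : 1 ≤ n)
    (ψ : (Fin d → ℝ) → Finset (Fin d → ℝ) → ℝ)
    (r₁ : ℝ) (hr₁ : 0 < r₁)
    (hmeas : ∀ i : Fin n, Measurable fun ω : Fin n → Fin d → ℝ =>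
      ψ (ω i) (Finset.image ω Finset.univ))
    (htrans : TransInvariant d (sideLen d n) ψ)
    (hrad : HasRadius d (sideLen d n) ψ r₁)
    (M : ℝ)
    (hM : ∀ (x : Fin d → ℝ) (𝒳 : Finset (Fin d → ℝ)),
      x ∈ 𝒳 → ↑𝒳 ⊆ box d (sideLen d n) → |ψ x 𝒳| ≤ M)
    (R : ℝ)
    (hR : ∀ (x x' : Fin d → ℝ) (𝒳 𝒳' : Finset (Fin d → ℝ)),
      x ∈ 𝒳 → ↑𝒳 ⊆ box d (sideLen d n) → x' ∈ 𝒳' → ↑𝒳' ⊆ box d (sideLen d n) →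
      ψ x 𝒳 - ψ x' 𝒳' ≤ R)
    (hmean : ∫ ω, ψ (ω ⟨0, by omega⟩) (Finset.image ω Finset.univ)
        ∂binppLaw d n = 0)
    (hphi : unitBallVol d * r₁ ^ d < n) :
    variance (fun ω : Fin n → Fin d → ℝ =>
        (1 / n : ℝ) * ∑ i, ψ (ω i) (Finset.image ω Finset.univ)) (binppLaw d n) ≤
      M ^ 2 / n * (1 + 2 ^ d * (unitBallVol d * r₁ ^ d)) +
        M / n * ((unitBallVol d * r₁ ^ d) +
            (unitBallVol d * r₁ ^ d) ^ 2 *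
              ((2 * n - unitBallVol d * r₁ ^ d) / (n - unitBallVol d * r₁ ^ d))) * R := by
  have : Fact (0 < sideLen d n) := ⟨sideLen_pos d hn⟩
  have hψ := isLocalFunctional_torusFunctional htrans hrad hM hR
  have hbound := empirical_mean_variance_bound_general hmeas htrans hrad hM hR hmean hr₁.le
  rw [Fintype.card_fin, sideLen_pow n hd, mul_pow, mul_left_comm] at hbound
  exact hbound.trans (variance_bound_le_of_lt (mul_nonneg hψ.bound_nonneg hψ.range_nonneg)
    (mul_nonneg ENNReal.toReal_nonneg (pow_nonneg hr₁.le d)) hphi (2 ^ d))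

end
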